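/- arXiv:2508.15177 — 3 statements merged into one kernel-verified Lean document; each statement's English description precedes it below -/
import Mathlib

section
/- A finite simple graph is word-representable if and only if it admits a semi-transitive orientation. -/
/-- Two distinct letters `x` and `y` alternate in the word `w` if the subsequence of `w`
formed by all occurrences of `x` and `y` has no two equal consecutive letters. -/
def Alternates {V : Type*} [DecidableEq V] (w : List V) (x y : V) : Prop :=
  (w.filter (fun z => decide (z = x ∨ z = y))).Chain' (· ≠ ·)

/-- A graph `G` is word-representable if there is a word over its vertex set, in which
every vertex occurs, such that two distinct vertices alternate in the word iff
they are adjacent in `G`. -/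
def WordRepresentable {V : Type*} [DecidableEq V] (G : SimpleGraph V) : Prop :=
  ∃ w : List V, (∀ v : V, v ∈ w) ∧
    ∀ x y : V, x ≠ y → (Alternates w x y ↔ G.Adj x y)

/-- `D` is an orientation of `G`: every directed edge lies on an edge of `G`, and every
edge of `G` receives exactly one direction. -/
def IsOrientation {V : Type*} (G : SimpleGraph V) (D : V → V → Prop) : Prop :=
  (∀ x y, D x y → G.Adj x y) ∧
  (∀ x y, G.Adj x y → (D x y ∨ D y x)) ∧
  (∀ x y, ¬ (D x y ∧ D y x))

/-- `D` is a semi-transitive orientation of `G`: it is an acyclic orientation and, for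
every directed path `p 0 → p 1 → ⋯ → p k` with `k ≥ 2`, either `p 0` and `p k` are not
adjacent in `G`, or `D (p i) (p j)` holds for all `i < j ≤ k`. -/
def IsSemiTransitiveOrientation {V : Type*} (G : SimpleGraph V) (D : V → V → Prop) : Prop :=
  IsOrientation G D ∧
  (∀ v, ¬ Relation.TransGen D v v) ∧
  (∀ (k : ℕ) (p : ℕ → V), 2 ≤ k → (∀ i < k, D (p i) (p (i + 1))) →
    ¬ G.Adj (p 0) (p k) ∨ ∀ i j, i < j → j ≤ k → D (p i) (p j))

namespace WR

/-- In every prefix, `x` occurs as often as `y` or once more. -/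
def Lead {V : Type*} [DecidableEq V] (w : List V) (x y : V) : Prop :=
  ∀ n, (w.take n).count y ≤ (w.take n).count x ∧ (w.take n).count x ≤ (w.take n).count y + 1

section words
variable {V : Type*} [DecidableEq V]

lemma lead_cons_self {w : List V} {x y : V} (h : x ≠ y) :
    Lead (x :: w) x y ↔ Lead w y x := by
  constructor
  · intro H n
    have := H (n + 1)
    simp [h] at this
    omega
  · intro H n
    cases n with
    | zero => simp
    | succ n =>
      have := H n
      simp [h]
      omega

lemma not_lead_cons {w : List V} {x y : V} (h : x ≠ y) : ¬ Lead (y :: w) x y := by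
  intro H
  have := H 1
  simp [h.symm] at this

lemma lead_cons_other {w : List V} {x y z : V} (hx : z ≠ x) (hy : z ≠ y) :
    Lead (z :: w) x y ↔ Lead w x y := by
  constructor
  · intro H n
    have := H (n + 1)
    simp [hx, hy] at this
    omega
  · intro H n
    cases n with
    | zero => simp
    | succ n =>
      have := H n
      simp [hx, hy]
      omega

/-- The subword on the letters `x`, `y`. -/
abbrev sub (w : List V) (x y : V) : List V := w.filter (fun z => decide (z = x ∨ z = y))

lemma sub_comm (w : List V) (x y : V) : sub w x y = sub w y x := by
  unfold sub
  congr 1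
  funext z
  simp [or_comm]

lemma alternates_comm {w : List V} {x y : V} : Alternates w x y ↔ Alternates w y x := by
  show (sub w x y).IsChain (· ≠ ·) ↔ (sub w y x).IsChain (· ≠ ·)
  rw [sub_comm]

lemma lead_iff (w : List V) : ∀ x y : V, x ≠ y →
    (Lead w x y ↔ (sub w x y).IsChain (· ≠ ·) ∧ (sub w x y).head? ≠ some y) := by
  induction w with
  | nil => intro x y h; simp [Lead, sub]
  | cons z w ih =>
    intro x y h
    by_cases hx : z = x
    · subst hx
      rw [lead_cons_self h, ih y z h.symm, sub_comm w y z]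
      have : sub (z :: w) z y = z :: sub w z y := by simp [sub]
      rw [this, List.isChain_cons]
      simp only [List.head?_cons, Option.mem_def]
      constructor
      · rintro ⟨h1, h2⟩
        refine ⟨⟨?_, h1⟩, by simpa using h⟩
        rintro a ha rfl
        exact h2 ha
      · rintro ⟨⟨h1, h2⟩, -⟩
        exact ⟨h2, fun h3 => h1 _ h3 rfl⟩
    · by_cases hy : z = y
      · subst hy
        have : sub (z :: w) x z = z :: sub w x z := by simp [sub]
        rw [this]
        simp [not_lead_cons h]
      · have : sub (z :: w) x y = sub w x y := by simp [sub, hx, hy]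
        rw [this, lead_cons_other hx hy, ih x y h]

lemma alternates_iff {w : List V} {x y : V} (h : x ≠ y) :
    Alternates w x y ↔ Lead w x y ∨ Lead w y x := by
  rw [lead_iff w x y h, lead_iff w y x h.symm, sub_comm w y x]
  show (sub w x y).IsChain (· ≠ ·) ↔ _
  constructor
  · intro H
    by_cases h1 : (sub w x y).head? = some y
    · right; refine ⟨H, ?_⟩
      rw [h1]; simpa using h.symm
    · exact Or.inl ⟨H, h1⟩
  · rintro (H | H) <;> exact H.1

/-- Equal counts on all prefixes force equal letters. -/
lemma eq_of_counts {w : List V} {x y : V} (hx : x ∈ w)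
    (h : ∀ n, (w.take n).count x = (w.take n).count y) : x = y := by
  obtain ⟨s, t, rfl⟩ := List.append_of_mem hx
  have h1 := h s.length
  have h2 := h (s.length + 1)
  by_contra hne
  have h3 : s.take (s.length + 1) = s := List.take_of_length_le (by omega)
  simp [List.take_append, hne, h3] at h1 h2
  omega

lemma lead_antisymm {w : List V} {x y : V} (hx : x ∈ w) (h1 : Lead w x y) (h2 : Lead w y x) :
    x = y :=
  eq_of_counts hx fun n => le_antisymm (h2 n).1 (h1 n).1

lemma forward {G : SimpleGraph V} (h : WordRepresentable G) :
    ∃ D : V → V → Prop, IsSemiTransitiveOrientation G D := by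
  obtain ⟨w, hw, hG⟩ := h
  have hD : ∀ x y, x ≠ y → Lead w x y → G.Adj x y := fun x y hne hl =>
    (hG x y hne).1 ((alternates_iff hne).2 (Or.inl hl))
  refine ⟨fun x y => x ≠ y ∧ Lead w x y, ⟨?_, ?_, ?_⟩, ?_, ?_⟩
  · rintro x y ⟨h1, h2⟩
    exact hD x y h1 h2
  · intro x y hxy
    rcases (alternates_iff hxy.ne).1 ((hG x y hxy.ne).2 hxy) with h | h
    · exact Or.inl ⟨hxy.ne, h⟩
    · exact Or.inr ⟨hxy.ne.symm, h⟩
  · rintro x y ⟨⟨h1, h2⟩, h3, h4⟩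
    exact h1 (lead_antisymm (hw x) h2 h4)
  · intro v hv
    have key : ∀ a b, Relation.ReflTransGen (fun x y => x ≠ y ∧ Lead w x y) a b →
        ∀ n, (w.take n).count b ≤ (w.take n).count a := by
      intro a b hab
      induction hab with
      | refl => intro n; exact le_rfl
      | tail _ h ih => intro n; exact (h.2 n).1.trans (ih n)
    obtain ⟨z, hz, hzv⟩ := Relation.TransGen.head'_iff.1 hv
    exact hz.1 (eq_of_counts (hw v) fun n => le_antisymm (key _ _ hzv n) (hz.2 n).1)
  · intro k p hk hp
    by_cases hadj : G.Adj (p 0) (p k)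
    swap
    · exact Or.inl hadj
    right
    have mono : ∀ i j, i ≤ j → j ≤ k → ∀ n, (w.take n).count (p j) ≤ (w.take n).count (p i) := by
      intro i j hij
      induction j, hij using Nat.le_induction with
      | base => intro _ n; exact le_rfl
      | succ j hj ih => intro hjk n; exact ((hp j (by omega)).2 n).1.trans (ih (by omega) n)
    have h0k : Lead w (p 0) (p k) := by
      rcases (alternates_iff hadj.ne).1 ((hG _ _ hadj.ne).2 hadj) with h | h
      · exact h
      · exact absurd (eq_of_counts (hw _) fun n =>
          le_antisymm (h n).1 (mono 0 k (by omega) le_rfl n)) hadj.ne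
    intro i j hij hjk
    refine ⟨?_, fun n => ⟨mono i j hij.le hjk n, ?_⟩⟩
    · intro he
      apply (hp i (by omega)).1
      apply eq_of_counts (hw _)
      intro n
      apply le_antisymm
      · rw [he]; exact mono (i + 1) j hij hjk n
      · exact ((hp i (by omega)).2 n).1
    · have h1 := mono 0 i (by omega) (by omega) n
      have h2 := mono j k hjk le_rfl n
      have h3 := (h0k n).2
      omega

/-- A uniform word compatible with the orientation `D`. -/
def Good (D : V → V → Prop) (w : List V) : Prop :=
  (∀ x y, D x y → Lead w x y) ∧ ∀ x y, w.count x = w.count y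

lemma Good.append {D : V → V → Prop} {u v : List V} (hu : Good D u) (hv : Good D v) :
    Good D (u ++ v) := by
  refine ⟨fun x y h n => ?_, fun x y => ?_⟩
  · rw [List.take_append, List.count_append, List.count_append]
    rcases le_total n u.length with hn | hn
    · have : n - u.length = 0 := by omega
      have := hu.1 x y h n
      simp [*]
    · rw [List.take_of_length_le hn, hu.2 x y]
      have := hv.1 x y h (n - u.length)
      omega
  · rw [List.count_append, List.count_append, hu.2 x y, hv.2 x y]

lemma Good.flatten {D : V → V → Prop} {L : List (List V)} (h : ∀ w ∈ L, Good D w) :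
    Good D L.flatten := by
  induction L with
  | nil => exact ⟨fun x y _ n => by simp, fun x y => by simp⟩
  | cons a L ih =>
    rw [List.flatten_cons]
    exact (h a (by simp)).append (ih fun w hw => h w (by simp [hw]))

lemma alternates_infix {u v : List V} {x y : V} (h : u <:+: v) (hv : Alternates v x y) :
    Alternates u x y :=
  List.IsChain.infix (l := sub v x y) hv (h.filter _)

end words

section orders

lemma acyclic_insert {α : Type*} {r : α → α → Prop} (hr : ∀ a, ¬ Relation.TransGen r a a)
    {p q : α} (hpq : ¬ Relation.ReflTransGen r q p) :
    ∀ a, ¬ Relation.TransGen (fun a b => r a b ∨ (a = p ∧ b = q)) a a := by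
  have key : ∀ a b, Relation.TransGen (fun a b => r a b ∨ (a = p ∧ b = q)) a b →
      Relation.TransGen r a b ∨ (Relation.ReflTransGen r a p ∧ Relation.ReflTransGen r q b) := by
    intro a b h
    induction h with
    | single h =>
      rcases h with h | ⟨rfl, rfl⟩
      · exact Or.inl (.single h)
      · exact Or.inr ⟨.refl, .refl⟩
    | tail _ h ih =>
      rcases h with h | ⟨rfl, rfl⟩
      · rcases ih with ih | ih
        · exact Or.inl (ih.tail h)
        · exact Or.inr ⟨ih.1, ih.2.tail h⟩
      · rcases ih with ih | ih
        · exact Or.inr ⟨ih.to_reflTransGen, .refl⟩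
        · exact Or.inr ⟨ih.1, .refl⟩
  intro a ha
  rcases key a a ha with h | ⟨h1, h2⟩
  · exact hr a h
  · exact hpq (h2.trans h1)

/-- Topological sort of a finite acyclic relation. -/
lemma exists_sort {α : Type*} [Fintype α] {r : α → α → Prop}
    (hr : ∀ a, ¬ Relation.TransGen r a a) :
    ∃ L : List α, L.Nodup ∧ (∀ a, a ∈ L) ∧
      ∀ n p q, r p q → q ∈ L.take n → p ∈ L.take n := by
  classical
  have hpo : IsPartialOrder α (Relation.ReflTransGen r) :=
    { refl := fun a => .refl
      trans := fun a b c => Relation.ReflTransGen.trans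
      antisymm := by
        intro a b h1 h2
        rcases Relation.reflTransGen_iff_eq_or_transGen.1 h1 with h | h
        · exact h.symm
        · exact absurd (h.trans_left h2) (hr a) }
  obtain ⟨s, hs, hrs⟩ := extend_partialOrder (Relation.ReflTransGen r)
  refine ⟨Finset.univ.sort s, Finset.sort_nodup _ _, fun a => by simp, ?_⟩
  intro n p q hpq hq
  have hsort : (Finset.univ.sort s).Pairwise s := Finset.pairwise_sort _ _
  have hp : p ∈ Finset.univ.sort s := by simp
  rw [← List.take_append_drop n (Finset.univ.sort s)] at hp hsort
  rcases List.mem_append.1 hp with h | h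
  · exact h
  · have h1 := (List.pairwise_append.1 hsort).2.2 q hq p h
    have h2 := hrs _ _ (Relation.ReflTransGen.single hpq)
    have : p = q := antisymm_of s h2 h1
    rwa [this]

lemma exists_path {α : Type*} {r : α → α → Prop} {a b : α} (h : Relation.ReflTransGen r a b) :
    ∃ (k : ℕ) (p : ℕ → α), p 0 = a ∧ p k = b ∧ ∀ i < k, r (p i) (p (i + 1)) := by
  induction h with
  | refl => exact ⟨0, fun _ => a, rfl, rfl, fun i hi => absurd hi (by omega)⟩
  | @tail b c _ h ih =>
    obtain ⟨k, p, h0, hk, hp⟩ := ih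
    refine ⟨k + 1, fun i => if i ≤ k then p i else c, by simp [h0], by simp, ?_⟩
    intro i hi
    rcases Nat.lt_or_ge i k with h' | h'
    · have h1 : i ≤ k := h'.le
      have h2 : i + 1 ≤ k := h'
      simpa [h1, h2] using hp i h'
    · have : i = k := by omega
      subst this
      simpa [hk] using h

end orders

section back
variable {V : Type*}

lemma shortcut {G : SimpleGraph V} {D : V → V → Prop} (hD : IsSemiTransitiveOrientation G D)
    {a x y b : V} (h1 : Relation.ReflTransGen D a x) (h2 : Relation.ReflTransGen D x y)
    (h3 : Relation.ReflTransGen D y b) (hne : x ≠ y) (hab : D a b) : D x y := by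
  obtain ⟨k1, p, p0, pk, hp⟩ := exists_path h1
  obtain ⟨k2, q, q0, qk, hq⟩ := exists_path h2
  obtain ⟨k3, r, r0, rk, hr⟩ := exists_path h3
  have hk2 : k2 ≠ 0 := by
    rintro rfl
    exact hne (q0.symm.trans qk)
  by_cases hk : k1 + k2 + k3 < 2
  · have e1 : k1 = 0 := by omega
    have e3 : k3 = 0 := by omega
    subst e1 e3
    rw [← pk, p0, ← r0, rk]
    exact hab
  set f : ℕ → V := fun i => if i < k1 then p i else if i < k1 + k2 then q (i - k1)
    else r (i - k1 - k2) with hf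
  have f1 : ∀ i ≤ k1, f i = p i := by
    intro i hi
    rcases hi.lt_or_eq with h | h
    · simp [hf, h]
    · have : i < k1 + k2 := by omega
      subst h
      simp [hf, pk, q0, Nat.pos_of_ne_zero hk2]
  have f2 : ∀ i ≤ k2, f (k1 + i) = q i := by
    intro i hi
    rcases hi.lt_or_eq with h | h
    · simp [hf, h]
    · subst h
      simp [hf, r0, qk]
  have f3 : ∀ i, f (k1 + k2 + i) = r i := by
    intro i
    have e1 : ¬ (k1 + k2 + i < k1) := by omega
    have e2 : ¬ (k1 + k2 + i < k1 + k2) := by omega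
    have e3 : k1 + k2 + i - k1 - k2 = i := by omega
    simp only [hf, e1, e2, e3, if_false]
  have := hD.2.2 (k1 + k2 + k3) f (by omega) (by
    intro i hi
    rcases Nat.lt_or_ge i k1 with h | h
    · rw [f1 i h.le, f1 (i + 1) h]
      exact hp i h
    rcases Nat.lt_or_ge i (k1 + k2) with h' | h'
    · obtain ⟨j, rfl⟩ := Nat.exists_eq_add_of_le h
      rw [add_assoc, f2 j (by omega), f2 (j + 1) (by omega)]
      exact hq j (by omega)
    · obtain ⟨j, rfl⟩ := Nat.exists_eq_add_of_le h'
      rw [add_assoc (k1 + k2), f3 j, f3 (j + 1)]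
      exact hr j (by omega))
  rw [f1 0 (by omega), f3, p0, rk] at this
  rcases this with h | h
  · exact absurd (hD.1.1 _ _ hab) h
  · have := h k1 (k1 + k2) (by omega) (by omega)
    rwa [f1 k1 le_rfl, pk, f2 k2 le_rfl, qk] at this

/-- Constraints on the two occurrences of each vertex. -/
def R (D : V → V → Prop) (p q : V × Bool) : Prop :=
  (D p.1 q.1 ∧ p.2 = q.2) ∨ (p.2 = false ∧ q.2 = true ∧ (q.1 = p.1 ∨ D q.1 p.1))

lemma R_acyclic {D : V → V → Prop} (hD : ∀ v, ¬ Relation.TransGen D v v) :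
    ∀ p, ¬ Relation.TransGen (R D) p p := by
  have key : ∀ p q, Relation.TransGen (R D) p q →
      (p.2 = q.2 ∧ Relation.TransGen D p.1 q.1) ∨ (p.2 = false ∧ q.2 = true) := by
    intro p q h
    induction h with
    | single h =>
      rcases h with h | h
      · exact Or.inl ⟨h.2, .single h.1⟩
      · exact Or.inr ⟨h.1, h.2.1⟩
    | tail _ h ih =>
      rcases h with h | h
      · rcases ih with ih | ih
        · exact Or.inl ⟨ih.1.trans h.2, ih.2.tail h.1⟩
        · exact Or.inr ⟨ih.1, h.2 ▸ ih.2⟩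
      · rcases ih with ih | ih
        · exact Or.inr ⟨ih.1.trans h.1, h.2.1⟩
        · exact Or.inr ⟨ih.1, h.2.1⟩
  intro p hp
  rcases key p p hp with h | h
  · exact hD _ h.2
  · rw [h.1] at h; simp at h

lemma R_path {D : V → V → Prop} {p q : V × Bool} (h : Relation.ReflTransGen (R D) p q) :
    (p.2 = q.2 ∧ Relation.ReflTransGen D p.1 q.1) ∨
    (p.2 = false ∧ q.2 = true ∧ ∃ c d, Relation.ReflTransGen D p.1 c ∧ (d = c ∨ D d c) ∧
      Relation.ReflTransGen D d q.1) := by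
  induction h with
  | refl => exact Or.inl ⟨rfl, .refl⟩
  | @tail b e _ h ih =>
    rcases h with h | h
    · rcases ih with ih | ⟨h1, h2, c, d, h3, h4, h5⟩
      · exact Or.inl ⟨ih.1.trans h.2, ih.2.tail h.1⟩
      · exact Or.inr ⟨h1, h.2 ▸ h2, c, d, h3, h4, h5.tail h.1⟩
    · rcases ih with ih | ⟨h1, h2, _⟩
      · exact Or.inr ⟨ih.1.trans h.1, h.2.1, b.1, e.1, ih.2, h.2.2, .refl⟩
      · rw [h.1] at h2; simp at h2

variable [DecidableEq V]

lemma count_map_fst {L : List (V × Bool)} (h : L.Nodup) (v : V) :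
    (L.map Prod.fst).count v =
      (if (v, false) ∈ L then 1 else 0) + (if (v, true) ∈ L then 1 else 0) := by
  induction L with
  | nil => simp
  | cons a L ih =>
    obtain ⟨a, b⟩ := a
    rw [List.nodup_cons] at h
    have h1 := h.1
    rw [List.map_cons, List.count_cons, ih h.2]
    by_cases hv : a = v
    · subst hv
      cases b <;> (simp [h1]; try omega)
    · have hv' : v ≠ a := fun e => hv e.symm
      simp [hv, hv']

/-- The word of a linear arrangement of the occurrences is good. -/
lemma good_of_sort {D : V → V → Prop} {L : List (V × Bool)} (hn : L.Nodup) (hm : ∀ a, a ∈ L)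
    (hL : ∀ n p q, R D p q → q ∈ L.take n → p ∈ L.take n) : Good D (L.map Prod.fst) := by
  constructor
  · intro x y hxy n
    rw [← List.map_take, count_map_fst (hn.sublist (List.take_sublist _ _)),
      count_map_fst (hn.sublist (List.take_sublist _ _))]
    have h1 := hL n (x, false) (y, false) (Or.inl ⟨hxy, rfl⟩)
    have h2 := hL n (x, true) (y, true) (Or.inl ⟨hxy, rfl⟩)
    have h3 := hL n (y, false) (x, true) (Or.inr ⟨rfl, rfl, Or.inr hxy⟩)
    split_ifs <;> simp_all
  · intro x y
    rw [count_map_fst hn, count_map_fst hn]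
    simp [hm]

/-- A prefix ending just before a given element. -/
lemma exists_cut {α : Type*} {L : List α} (hn : L.Nodup) {p q : α} (hq : q ∈ L) (hpq : p ≠ q)
    (hL : ∀ n, q ∈ L.take n → p ∈ L.take n) :
    ∃ n, p ∈ L.take n ∧ q ∉ L.take n := by
  obtain ⟨s, t, rfl⟩ := List.append_of_mem hq
  have h3 : s.take (s.length + 1) = s := List.take_of_length_le (by omega)
  refine ⟨s.length, ?_, ?_⟩
  · have := hL (s.length + 1)
    simpa [List.take_append, h3, hpq] using this
  · have := List.nodup_append.1 hn
    intro h
    simp at h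
    exact this.2.2 q h q (by simp) rfl

variable [Fintype V]

/-- A comparable non-adjacent pair can be separated. -/
lemma sep_comparable {G : SimpleGraph V} {D : V → V → Prop}
    (hD : IsSemiTransitiveOrientation G D) {x y : V} (hne : x ≠ y) (hadj : ¬ G.Adj x y)
    (hxy : Relation.ReflTransGen D x y) : ∃ w, Good D w ∧ ¬ Alternates w x y := by
  have hlt : Relation.TransGen D x y := by
    rcases Relation.reflTransGen_iff_eq_or_transGen.1 hxy with h | h
    · exact absurd h.symm hne
    · exact h
  have hno : ¬ Relation.ReflTransGen (R D) (y, false) (x, true) := by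
    intro h
    rcases R_path h with h | ⟨-, -, c, d, h1, h2, h3⟩
    · simp at h
    · rcases h2 with rfl | h2
      · exact hD.2.1 x ((hlt.trans_left h1).trans_left h3)
      · exact hadj (hD.1.1 _ _ (shortcut hD h3 hxy h1 hne h2))
  obtain ⟨L, hn, hm, hL⟩ := exists_sort (acyclic_insert (R_acyclic hD.2.1) hno)
  have hR : ∀ n p q, R D p q → q ∈ L.take n → p ∈ L.take n := fun n p q h => hL n p q (Or.inl h)
  refine ⟨L.map Prod.fst, good_of_sort hn hm hR, ?_⟩
  obtain ⟨n, h1, h2⟩ := exists_cut hn (hm (y, false)) (p := (x, true)) (by simp)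
    (fun n => hL n _ _ (Or.inr ⟨rfl, rfl⟩))
  have h3 := hR n (x, false) (x, true) (Or.inr ⟨rfl, rfl, Or.inl rfl⟩) h1
  have h4 : (y, true) ∉ L.take n := fun h =>
    h2 (hR n (y, false) (y, true) (Or.inr ⟨rfl, rfl, Or.inl rfl⟩) h)
  rw [alternates_iff hne]
  have hs := hn.sublist (List.take_sublist n L)
  rintro (h | h)
  · have := h n
    rw [← List.map_take, count_map_fst hs, count_map_fst hs] at this
    simp [h1, h2, h3, h4] at this
  · have := h n
    rw [← List.map_take, count_map_fst hs, count_map_fst hs] at this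
    simp [h1, h2, h3, h4] at this

/-- An incomparable pair can be separated. -/
lemma sep_incomparable {G : SimpleGraph V} {D : V → V → Prop}
    (hD : IsSemiTransitiveOrientation G D) {x y : V} (hne : x ≠ y)
    (hxy : ¬ Relation.ReflTransGen D x y) (hyx : ¬ Relation.ReflTransGen D y x) :
    ∃ w, Good D w ∧ ¬ Alternates w x y := by
  have hno : ¬ Relation.ReflTransGen (R D) (y, false) (x, false) := by
    intro h
    rcases R_path h with h | h
    · exact hyx h.2
    · simp at h
  have hac := acyclic_insert (R_acyclic hD.2.1) hno
  have hpath : ∀ p q, Relation.ReflTransGen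
      (fun a b => R D a b ∨ (a = (x, false) ∧ b = (y, false))) p q → p.2 = true →
      q.2 = true ∧ Relation.ReflTransGen D p.1 q.1 := by
    intro p q h hp
    induction h with
    | refl => exact ⟨hp, .refl⟩
    | tail _ h ih =>
      rcases h with (h | h) | ⟨rfl, rfl⟩
      · exact ⟨h.2 ▸ ih.1, ih.2.tail h.1⟩
      · have := ih.1
        rw [h.1] at this; simp at this
      · simp at ih
  have hno2 : ¬ Relation.ReflTransGen
      (fun a b => R D a b ∨ (a = (x, false) ∧ b = (y, false))) (x, true) (y, true) :=
    fun h => hxy (hpath _ _ h rfl).2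
  obtain ⟨L, hn, hm, hL⟩ := exists_sort (acyclic_insert hac hno2)
  have hR : ∀ n p q, R D p q → q ∈ L.take n → p ∈ L.take n :=
    fun n p q h => hL n p q (Or.inl (Or.inl h))
  refine ⟨L.map Prod.fst, good_of_sort hn hm hR, ?_⟩
  rw [alternates_iff hne]
  rintro (h | h)
  · obtain ⟨n, h1, h2⟩ := exists_cut hn (hm (x, true)) (p := (y, true)) (by simpa using hne.symm)
      (fun n => hL n _ _ (Or.inr ⟨rfl, rfl⟩))
    have h3 := hR n (y, false) (y, true) (Or.inr ⟨rfl, rfl, Or.inl rfl⟩) h1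
    have hs := hn.sublist (List.take_sublist n L)
    have := h n
    rw [← List.map_take, count_map_fst hs, count_map_fst hs] at this
    simp only [h1, h2, h3, if_true, if_false] at this
    split_ifs at this <;> omega
  · obtain ⟨n, h1, h2⟩ := exists_cut hn (hm (y, false)) (p := (x, false)) (by simpa using hne)
      (fun n => hL n _ _ (Or.inl (Or.inr ⟨rfl, rfl⟩)))
    have h4 : (y, true) ∉ L.take n := fun h =>
      h2 (hR n (y, false) (y, true) (Or.inr ⟨rfl, rfl, Or.inl rfl⟩) h)
    have hs := hn.sublist (List.take_sublist n L)
    have := h n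
    rw [← List.map_take, count_map_fst hs, count_map_fst hs] at this
    simp only [h1, h2, h4, if_true, if_false] at this
    omega

lemma backward {G : SimpleGraph V} {D : V → V → Prop}
    (hD : IsSemiTransitiveOrientation G D) : WordRepresentable G := by
  obtain ⟨L, hn, hm, hL⟩ := exists_sort (R_acyclic hD.2.1)
  have hbase := good_of_sort hn hm hL
  have hex : ∀ e : V × V, ∃ w, Good D w ∧ (e.1 ≠ e.2 → ¬ G.Adj e.1 e.2 →
      ¬ Alternates w e.1 e.2) := by
    rintro ⟨x, y⟩
    by_cases hne : x = y
    · exact ⟨_, hbase, fun h => absurd hne h⟩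
    by_cases hadj : G.Adj x y
    · exact ⟨_, hbase, fun _ h => absurd hadj h⟩
    by_cases hxy : Relation.ReflTransGen D x y
    · obtain ⟨w, h1, h2⟩ := sep_comparable hD hne hadj hxy
      exact ⟨w, h1, fun _ _ => h2⟩
    by_cases hyx : Relation.ReflTransGen D y x
    · obtain ⟨w, h1, h2⟩ := sep_comparable hD (Ne.symm hne) (fun h => hadj h.symm) hyx
      exact ⟨w, h1, fun _ _ h => h2 (alternates_comm.1 h)⟩
    · obtain ⟨w, h1, h2⟩ := sep_incomparable hD hne hxy hyx
      exact ⟨w, h1, fun _ _ => h2⟩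
  choose W hW hW' using hex
  have hgood : Good D (L.map Prod.fst ++ ((Finset.univ : Finset (V × V)).toList.map W).flatten) :=
    hbase.append (Good.flatten (by
      intro w hw
      obtain ⟨e, -, rfl⟩ := List.mem_map.1 hw
      exact hW e))
  refine ⟨L.map Prod.fst ++ ((Finset.univ : Finset (V × V)).toList.map W).flatten, ?_, ?_⟩
  · intro v
    exact List.mem_append_left _ (List.mem_map.2 ⟨(v, false), hm _, rfl⟩)
  · intro x y hne
    constructor
    · intro h
      by_contra hadj
      refine hW' (x, y) hne hadj (alternates_infix ?_ h)
      have hmem : W (x, y) ∈ (Finset.univ : Finset (V × V)).toList.map W :=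
        List.mem_map.2 ⟨(x, y), by simp, rfl⟩
      exact (List.infix_of_mem_flatten hmem).trans (List.suffix_append _ _).isInfix
    · intro h
      rw [alternates_iff hne]
      rcases hD.1.2.1 x y h with h | h
      · exact Or.inl (hgood.1 _ _ h)
      · exact Or.inr (hgood.1 _ _ h)

end back

end WR

/-- A finite simple graph is word-representable if and only if it admits a
semi-transitive orientation. -/
theorem stmt0 {V : Type*} [Fintype V] [DecidableEq V] (G : SimpleGraph V) :
    WordRepresentable G ↔ ∃ D : V → V → Prop, IsSemiTransitiveOrientation G D := by
  exact ⟨WR.forward, fun ⟨_, hD⟩ => WR.backward hD⟩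
end

section
/- For every n ≥ 1 and every m ∈ {1, 2}, every K_m-K_n graph is word-representable. -/
/-- `G` is a `K_m`-`K_n` graph: its vertex set can be partitioned into a set `A` of size
`m` and a set `B` of size `n`, each inducing a clique, such that no vertex of `B` is
adjacent to every vertex of `A`. -/
def IsKmKn {V : Type*} [Fintype V] [DecidableEq V] (G : SimpleGraph V) (m n : ℕ) : Prop :=
  ∃ A B : Finset V, A ∪ B = Finset.univ ∧ Disjoint A B ∧ A.card = m ∧ B.card = n ∧
    G.IsClique (A : Set V) ∧ G.IsClique (B : Set V) ∧
    ∀ b ∈ B, ∃ a ∈ A, ¬ G.Adj b a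


set_option linter.unusedSimpArgs false
set_option linter.deprecated false

lemma alternates_comm {V : Type*} [DecidableEq V] (w : List V) (x y : V) :
    Alternates w x y ↔ Alternates w y x := by
  unfold Alternates
  simp only [or_comm]

lemma filter_none {V : Type*} [DecidableEq V] (L : List V) (x y : V)
    (hx : x ∉ L) (hy : y ∉ L) : L.filter (fun z => decide (z = x ∨ z = y)) = [] := by
  rw [List.filter_eq_nil_iff]
  intro z hz
  simp only [decide_eq_true_eq]
  rintro (rfl | rfl) <;> contradiction

lemma filter_right {V : Type*} [DecidableEq V] (L : List V) (hL : L.Nodup) (x y : V)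
    (hx : x ∉ L) (hy : y ∈ L) : L.filter (fun z => decide (z = x ∨ z = y)) = [y] := by
  obtain ⟨s, t, rfl⟩ := List.append_of_mem hy
  have hs : y ∉ s ∧ y ∉ t := by
    simp [List.nodup_append, List.nodup_cons] at hL
    grind
  simp only [List.mem_append, List.mem_cons, not_or] at hx
  rw [List.filter_append, filter_none s x y hx.1 hs.1, List.filter_cons_of_pos (by simp),
    filter_none t x y hx.2.2 hs.2]
  rfl

lemma filter_both {V : Type*} [DecidableEq V] (L : List V) (hL : L.Nodup) (x y : V) (hxy : x ≠ y)
    (hx : x ∈ L) (hy : y ∈ L) : L.filter (fun z => decide (z = x ∨ z = y)) = [x, y] ∨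
      L.filter (fun z => decide (z = x ∨ z = y)) = [y, x] := by
  induction L with
  | nil => simp at hx
  | cons c L ih =>
    rw [List.nodup_cons] at hL
    by_cases h1 : c = x
    · subst h1
      left
      rw [List.filter_cons_of_pos (by simp), filter_right L hL.2 c y hL.1 (by grind)]
    · by_cases h2 : c = y
      · subst h2
        right
        rw [List.filter_cons_of_pos (by simp)]
        simp only [or_comm (b := _ = c)]
        rw [filter_right L hL.2 c x hL.1 (by grind)]
      · rw [List.filter_cons_of_neg (by simp [h1, h2])]
        exact ih hL.2 (by grind) (by grind)

theorem stmt5 {V : Type*} [Fintype V] [DecidableEq V] (G : SimpleGraph V)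
    (m n : ℕ) (hm : m = 1 ∨ m = 2) (hn : 1 ≤ n) (h : IsKmKn G m n) :
    WordRepresentable G := by
  classical
  obtain ⟨A, B, hU, hD, hA, hB, cA, cB, hna⟩ := h
  have hcov : ∀ v, v ∈ A ∨ v ∈ B := fun v => by
    have := Finset.mem_univ v
    rwa [← hU, Finset.mem_union] at this
  have hdis : ∀ v, v ∈ A → v ∉ B := fun v h1 h2 => Finset.disjoint_left.1 hD h1 h2
  rcases hm with rfl | rfl
  · obtain ⟨a, rfl⟩ := Finset.card_eq_one.1 hA
    simp only [Finset.mem_singleton, exists_eq_left, forall_eq] at hcov hdis hna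
    set L := B.toList with hLdef
    have hL : L.Nodup := B.nodup_toList
    have hmem : ∀ v, v ∈ L ↔ v ∈ B := fun v => Finset.mem_toList
    have key : ∀ y ∈ B, ¬ Alternates (L ++ ([a] ++ ([a] ++ L))) a y := by
      intro y hy
      unfold Alternates
      have hf := filter_right L hL a y (by rwa [hmem]) (by rwa [hmem])
      simp only [List.filter_append, hf]
      simp [List.Chain', List.filter]
    refine ⟨L ++ ([a] ++ ([a] ++ L)), fun v => ?_, fun x y hxy => ?_⟩
    · rcases hcov v with rfl | hv
      · simp
      · simp [hmem, hv]
    · rcases hcov x with hx | hx <;> rcases hcov y with hy | hy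
      · exact absurd (hx.trans hy.symm) hxy
      · subst hx
        exact iff_of_false (key y hy) (fun h => hna y hy h.symm)
      · subst hy
        rw [alternates_comm]
        exact iff_of_false (key x hx) (hna x hx)
      · refine iff_of_true ?_ (cB hx hy hxy)
        have hax : a ≠ x := by rintro rfl; exact hdis hx
        have hay : a ≠ y := by rintro rfl; exact hdis hy
        unfold Alternates
        rcases filter_both L hL x y hxy ((hmem x).2 hx) ((hmem y).2 hy) with hf | hf <;>
        · simp only [List.filter_append, hf]
          simp [List.Chain', List.filter, hax, hay, hxy, hxy.symm]
  · obtain ⟨a, b, hab, rfl⟩ := Finset.card_eq_two.1 hA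
    have hadj : G.Adj a b := cA (by simp) (by simp) hab
    have haB : a ∉ B := hdis a (by simp)
    have hbB : b ∉ B := hdis b (by simp)
    replace hna : ∀ v ∈ B, ¬ (G.Adj v a ∧ G.Adj v b) := by
      rintro v hv ⟨h1, h2⟩
      obtain ⟨c, hc, h3⟩ := hna v hv
      simp only [Finset.mem_insert, Finset.mem_singleton] at hc
      rcases hc with rfl | rfl <;> contradiction
    set P := (B.filter (fun v => G.Adj v a)).toList with hP
    set Q := (B.filter (fun v => G.Adj v b)).toList with hQ
    set R := (B.filter (fun v => ¬ G.Adj v a ∧ ¬ G.Adj v b)).toList with hR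
    have nP : P.Nodup := Finset.nodup_toList _
    have nQ : Q.Nodup := Finset.nodup_toList _
    have nR : R.Nodup := Finset.nodup_toList _
    have mP : ∀ v, v ∈ P ↔ v ∈ B ∧ G.Adj v a := fun v => by simp [hP]
    have mQ : ∀ v, v ∈ Q ↔ v ∈ B ∧ G.Adj v b := fun v => by simp [hQ]
    have mR : ∀ v, v ∈ R ↔ v ∈ B ∧ ¬ G.Adj v a ∧ ¬ G.Adj v b := fun v => by simp [hR]
    clear_value P Q R
    have nL : (Q ++ (R ++ P)).Nodup := by
      simp only [List.nodup_append', List.disjoint_left, List.mem_append]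
      grind
    have mL : ∀ v, v ∈ Q ++ (R ++ P) ↔ v ∈ B := fun v => by
      simp only [List.mem_append]
      grind
    obtain ⟨w, hw⟩ : ∃ w, w = Q ++ (R ++ ([a] ++ (P ++ ([b] ++ ([a] ++ (Q ++ ([b] ++ (R ++ P)))))))) :=
      ⟨_, rfl⟩
    have keyab : Alternates w a b := by
      unfold Alternates
      rw [hw]
      simp only [List.filter_append, filter_none P a b (by grind) (by grind),
        filter_none Q a b (by grind) (by grind), filter_none R a b (by grind) (by grind)]
      simp [List.Chain', List.filter, hab, hab.symm]
    have keya : ∀ y ∈ B, (Alternates w a y ↔ G.Adj a y) := by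
      intro y hy
      have hay : a ≠ y := by rintro rfl; exact haB hy
      have hby : b ≠ y := by rintro rfl; exact hbB hy
      rw [G.adj_comm]
      unfold Alternates
      rw [hw]
      by_cases h1 : G.Adj y a
      · simp only [List.filter_append, filter_right P nP a y (by grind) (by grind),
          filter_none Q a y (by grind) (by grind), filter_none R a y (by grind) (by grind)]
        simp [List.Chain', List.filter, hab, hab.symm, hay, hay.symm, hby, h1]
      · by_cases h2 : G.Adj y b
        · simp only [List.filter_append, filter_none P a y (by grind) (by grind),
            filter_right Q nQ a y (by grind) (by grind), filter_none R a y (by grind) (by grind)]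
          simp [List.Chain', List.filter, hab, hab.symm, hay, hay.symm, hby, h1]
        · simp only [List.filter_append, filter_none P a y (by grind) (by grind),
            filter_none Q a y (by grind) (by grind), filter_right R nR a y (by grind) (by grind)]
          simp [List.Chain', List.filter, hab, hab.symm, hay, hay.symm, hby, h1]
    have keyb : ∀ y ∈ B, (Alternates w b y ↔ G.Adj b y) := by
      intro y hy
      have hay : a ≠ y := by rintro rfl; exact haB hy
      have hby : b ≠ y := by rintro rfl; exact hbB hy
      rw [G.adj_comm]
      unfold Alternates
      rw [hw]
      by_cases h1 : G.Adj y a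
      · have h2 : ¬ G.Adj y b := fun h => hna y hy ⟨h1, h⟩
        simp only [List.filter_append, filter_right P nP b y (by grind) (by grind),
          filter_none Q b y (by grind) (by grind), filter_none R b y (by grind) (by grind)]
        simp [List.Chain', List.filter, hab, hby.symm, hay, hby, h2]
      · by_cases h2 : G.Adj y b
        · simp only [List.filter_append, filter_none P b y (by grind) (by grind),
            filter_right Q nQ b y (by grind) (by grind), filter_none R b y (by grind) (by grind)]
          simp [List.Chain', List.filter, hab, hby.symm, hay, hby, h2]
        · simp only [List.filter_append, filter_none P b y (by grind) (by grind),
            filter_none Q b y (by grind) (by grind), filter_right R nR b y (by grind) (by grind)]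
          simp [List.Chain', List.filter, hab, hby.symm, hay, hby, h2]
    have keyB : ∀ x ∈ B, ∀ y ∈ B, x ≠ y → Alternates w x y := by
      intro x hx y hy hxy
      have hax : a ≠ x := by rintro rfl; exact haB hx
      have hay : a ≠ y := by rintro rfl; exact haB hy
      have hbx : b ≠ x := by rintro rfl; exact hbB hx
      have hby : b ≠ y := by rintro rfl; exact hbB hy
      have ea : [a].filter (fun z => decide (z = x ∨ z = y)) = [] := by
        simp [hax, hay]
      have eb : [b].filter (fun z => decide (z = x ∨ z = y)) = [] := by
        simp [hbx, hby]
      have e : w.filter (fun z => decide (z = x ∨ z = y)) =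
          (Q ++ (R ++ P)).filter (fun z => decide (z = x ∨ z = y)) ++
          (Q ++ (R ++ P)).filter (fun z => decide (z = x ∨ z = y)) := by
        rw [hw]
        simp only [List.filter_append, ea, eb, List.nil_append, List.append_assoc]
      unfold Alternates
      rw [e]
      rcases filter_both _ nL x y hxy ((mL x).2 hx) ((mL y).2 hy) with hf | hf <;>
      · rw [hf]
        simp [List.Chain', hxy, hxy.symm]
    simp only [Finset.mem_insert, Finset.mem_singleton] at hcov
    refine ⟨w, fun v => ?_, fun x y hxy => ?_⟩
    · rw [hw]
      rcases hcov v with (rfl | rfl) | hv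
      · simp
      · simp
      · have := (mL v).2 hv
        simp only [List.mem_append] at this ⊢
        tauto
    · rcases hcov x with (rfl | rfl) | hx <;> rcases hcov y with (rfl | rfl) | hy
      · exact absurd rfl hxy
      · exact iff_of_true keyab hadj
      · exact keya y hy
      · exact iff_of_true ((alternates_comm _ _ _).1 keyab) hadj.symm
      · exact absurd rfl hxy
      · exact keyb y hy
      · rw [alternates_comm, G.adj_comm]; exact keya x hx
      · rw [alternates_comm, G.adj_comm]; exact keyb x hx
      · exact iff_of_true (keyB x hx y hy hxy) (cB hx hy hxy)
end

section
/- For every n ≥ 1, a K_3-K_n graph is word-representable if and only if it does not contain the graph A_3 as an induced subgraph. -/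
/-- `G` contains `H` as an induced subgraph. -/
def ContainsInducedCopy {V W : Type*} (G : SimpleGraph V) (H : SimpleGraph W) : Prop :=
  ∃ f : W → V, Function.Injective f ∧ ∀ a b, H.Adj a b ↔ G.Adj (f a) (f b)

/-- The graph `A₃` on vertices `{1,…,7}` (represented by `Fin 7`, with vertex `i`
of the paper corresponding to `i - 1` here): a clique on `{1,2,3,4}` together with the
edges `{1,5},{2,5},{1,6},{3,6},{2,7},{3,7},{5,6},{5,7},{6,7}`. -/
def A3 : SimpleGraph (Fin 7) :=
  SimpleGraph.fromRel (fun a b => (a, b) ∈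
    ([(0,1),(0,2),(0,3),(1,2),(1,3),(2,3),
      (0,4),(1,4),(0,5),(2,5),(1,6),(2,6),(4,5),(4,6),(5,6)] : List (Fin 7 × Fin 7)))

/-- Pointwise comparison of the numbers of occurrences in prefixes. -/
def WP {V : Type*} [DecidableEq V] (w : List V) (x y : V) : Prop :=
  ∀ l, l <+: w → l.count y ≤ l.count x

/-- `x` and `y` alternate, with `x` first. -/
def WR {V : Type*} [DecidableEq V] (w : List V) (x y : V) : Prop :=
  ∀ l, l <+: w → l.count y ≤ l.count x ∧ l.count x ≤ l.count y + 1

theorem WR_nil {V : Type*} [DecidableEq V] (x y : V) : WR [] x y := by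
  intro l hl
  simp at hl
  subst hl
  simp

theorem WR_iff {V : Type*} [DecidableEq V] (w : List V) : ∀ (x y : V), x ≠ y →
    (WR w x y ↔ (y :: w.filter (fun z => decide (z = x ∨ z = y))).IsChain (· ≠ ·)) := by
  induction w with
  | nil => intro x y h; simp [WR_nil]
  | cons z w ih =>
    intro x y h
    by_cases hx : z = x
    · subst hx
      have e : WR (z :: w) z y ↔ WR w y z := by
        constructor
        · intro H l hl
          have := H (z :: l) (by simpa using hl)
          simp [h] at this
          omega
        · intro H l hl
          cases l with
          | nil => simp
          | cons a l =>
            simp at hl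
            obtain ⟨rfl, hl⟩ := hl
            have := H l hl
            simp [h]
            omega
      rw [e, ih y z h.symm]
      simp [h.symm, or_comm]
    · by_cases hy : z = y
      · subst hy
        have : ¬ WR (z :: w) x z := by
          intro H
          have := H [z] (by simp)
          simp [Ne.symm h] at this
        simp [this]
      · have e : WR (z :: w) x y ↔ WR w x y := by
          constructor
          · intro H l hl
            have := H (z :: l) (by simpa using hl)
            simpa [hx, hy] using this
          · intro H l hl
            cases l with
            | nil => simp
            | cons a l =>
              simp at hl
              obtain ⟨rfl, hl⟩ := hl
              have := H l hl
              simpa [hx, hy] using this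
        rw [e, ih x y h]
        simp [hx, hy]

theorem alternates_iff {V : Type*} [DecidableEq V] (w : List V) (x y : V) (h : x ≠ y) :
    Alternates w x y ↔ WR w x y ∨ WR w y x := by
  rw [WR_iff w x y h, WR_iff w y x h.symm]
  have e : (fun z => decide (z = y ∨ z = x)) = (fun z => decide (z = x ∨ z = y)) := by
    funext z; simp [or_comm]
  rw [e]
  unfold Alternates
  have hm : ∀ z ∈ w.filter (fun z => decide (z = x ∨ z = y)), z = x ∨ z = y := by
    intro z hz; simpa using (List.mem_filter.1 hz).2
  change List.IsChain _ _ ↔ _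
  generalize w.filter (fun z => decide (z = x ∨ z = y)) = f at *
  cases f with
  | nil => simp
  | cons a f =>
    rcases hm a (by simp) with rfl | rfl
    · simp [h.symm]
    · simp [h]

theorem WP_antisymm {V : Type*} [DecidableEq V] (w : List V) (x y : V) (h : x ≠ y)
    (hx : x ∈ w) (h1 : WP w x y) (h2 : WP w y x) : False := by
  obtain ⟨l1, l2, rfl⟩ := List.append_of_mem hx
  have a := h1 l1 (by simp)
  have b := h2 (l1 ++ [x]) (by simp)
  simp [h] at b
  omega

theorem WR.toP {V : Type*} [DecidableEq V] {w : List V} {x y : V} (h : WR w x y) : WP w x y :=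
  fun l hl => (h l hl).1

theorem WR.shrink {V : Type*} [DecidableEq V] {w : List V} {x y z : V} (h : WR w x z)
    (h1 : WP w x y) (h2 : WP w y z) : WR w x y ∧ WR w y z := by
  constructor <;> intro l hl <;> have := h l hl <;> have := h1 l hl <;> have := h2 l hl <;> omega

theorem WP.trans {V : Type*} [DecidableEq V] {w : List V} {x y z : V}
    (h1 : WP w x y) (h2 : WP w y z) : WP w x z :=
  fun l hl => (h2 l hl).trans (h1 l hl)

/-- Abstract contradiction: `P` is an order, `R` the oriented edges. -/
theorem btw_lemma {V : Type*} (P R : V → V → Prop)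
    (tr : ∀ x y z, P x y → P y z → P x z)
    (rp : ∀ x y, R x y → P x y)
    (sh : ∀ x y z, R x z → P x y → P y z → R x y ∧ R y z)
    (u p q m m' : V)
    (hpq : R p q)
    (hm : ¬ R u m ∧ ¬ R m u) (hm' : ¬ R u m' ∧ ¬ R m' u)
    (hup : R u p ∨ R p u) (huq : R u q ∨ R q u)
    (pm' : R p m' ∨ R m' p) (qm' : R q m' ∨ R m' q) :
    (P p m ∧ P m q) → (P p m' ∧ P m' q) := by
  rintro ⟨h1, h2⟩
  -- `u` must be between `p` and `q`
  have hpu : R p u := by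
    rcases hup with h | h
    · rcases huq with h' | h'
      · exact absurd (sh u m q h' (tr _ _ _ (rp _ _ h) h1) h2).1 hm.1
      · have h3 := sh q p u h' 
        exfalso
        have hqm : P q p := tr _ _ _ (rp _ _ h') (rp _ _ h)
        exact hm.1 (sh u m p h (tr _ _ _ (tr _ _ _ (rp _ _ h) h1) (tr _ _ _ h2 (tr _ _ _ hqm h1)))
          (tr _ _ _ h2 hqm)).1
    · exact h
  have huq' : R u q := by
    rcases huq with h' | h'
    · exact h'
    · exact absurd (sh p m u hpu h1 (tr _ _ _ h2 (rp _ _ h'))).2 hm.2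
  constructor
  · rcases pm' with h | h
    · exact rp _ _ h
    · rcases qm' with h' | h'
      · exact absurd (sh u q m' |> fun _ => (sh p u q hpq (rp _ _ hpu) (rp _ _ huq'))) (by
          intro _
          have hqp : P q p := tr _ _ _ (rp _ _ h') (rp _ _ h)
          exact hm'.1 (sh u m' q huq' (tr _ _ _ (rp _ _ huq') (rp _ _ h'))
            (tr _ _ _ (rp _ _ h) (rp _ _ hpq))).1)
      · exact absurd (sh m' u q h' (tr _ _ _ (rp _ _ h) (rp _ _ hpu)) (rp _ _ huq')).1 hm'.2
  · rcases qm' with h | h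
    · rcases pm' with h' | h'
      · exact absurd (sh p u m' h' (rp _ _ hpu) (tr _ _ _ (rp _ _ huq') (rp _ _ h))).2 hm'.1
      · exact absurd (sh u m' q huq' (tr _ _ _ (rp _ _ huq') (rp _ _ h))
            (tr _ _ _ (rp _ _ h') (rp _ _ hpq))).1 hm'.1
    · exact rp _ _ h

/-- Case `a > b > c` of the obstruction. -/
theorem core {V : Type*} (P R : V → V → Prop)
    (tr : ∀ x y z, P x y → P y z → P x z)
    (rp : ∀ x y, R x y → P x y)
    (sh : ∀ x y z, R x z → P x y → P y z → R x y ∧ R y z)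
    (a b c d x y z : V)
    (ab' : ¬ P b a) (bc' : ¬ P c b)
    (ab : R a b) (bc : R b c) (ac : R a c) (ad : R a d ∨ R d a) (bd : R b d ∨ R d b)
    (cd : R c d ∨ R d c)
    (xb : R x b ∨ R b x) (xc : R x c ∨ R c x) (xa : ¬ R x a ∧ ¬ R a x) (xd : ¬ R x d ∧ ¬ R d x)
    (ya : R y a ∨ R a y) (yc : R y c ∨ R c y) (yb : ¬ R y b ∧ ¬ R b y) (yd : ¬ R y d ∧ ¬ R d y)
    (za : R z a ∨ R a z) (zb : R z b ∨ R b z) (zc : ¬ R z c ∧ ¬ R c z) (zd : ¬ R z d ∧ ¬ R d z) :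
    False := by
  have h := btw_lemma P R tr rp sh y a c b d ac yb yd ya yc ad cd ⟨rp _ _ ab, rp _ _ bc⟩
  rcases bd with hd | hd
  · exact ab' (btw_lemma P R tr rp sh x b c d a bc xd xa xb xc (Or.inr ab) (Or.inr ac)
      ⟨rp _ _ hd, h.2⟩).1
  · exact bc' (btw_lemma P R tr rp sh z a b d c ab zd zc za zb (Or.inl ac) (Or.inl bc)
      ⟨h.1, rp _ _ hd⟩).2

theorem not_rep_of_A3 {V : Type*} [DecidableEq V] (G : SimpleGraph V)
    (h : ContainsInducedCopy G A3) : ¬ WordRepresentable G := by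
  rintro ⟨w, hw, hG⟩
  obtain ⟨f, hf, hA⟩ := h
  have tr : ∀ x y z, WP w x y → WP w y z → WP w x z := fun _ _ _ => WP.trans
  have rp : ∀ x y, WR w x y → WP w x y := fun _ _ => WR.toP
  have sh : ∀ x y z, WR w x z → WP w x y → WP w y z → WR w x y ∧ WR w y z :=
    fun _ _ _ => WR.shrink
  have adj : ∀ i j : Fin 7, i ≠ j → A3.Adj i j → (WR w (f i) (f j) ∨ WR w (f j) (f i)) := by
    intro i j hij hh
    rw [← alternates_iff w _ _ (hf.ne hij), hG _ _ (hf.ne hij), ← hA]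
    exact hh
  have nadj : ∀ i j : Fin 7, i ≠ j → ¬ A3.Adj i j →
      (¬ WR w (f i) (f j) ∧ ¬ WR w (f j) (f i)) := by
    intro i j hij hh
    rw [← not_or, ← alternates_iff w _ _ (hf.ne hij), hG _ _ (hf.ne hij), ← hA]
    exact hh
  have anti : ∀ i j : Fin 7, i ≠ j → WR w (f i) (f j) → ¬ WP w (f j) (f i) := by
    intro i j hij h1 h2
    exact WP_antisymm w _ _ (hf.ne hij) (hw _) h1.toP h2
  have main : ∀ a b c x y z : Fin 7, [a, b, c, x, y, z, 3].Nodup →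
      A3.Adj a b → A3.Adj b c → A3.Adj a c → A3.Adj a 3 → A3.Adj b 3 → A3.Adj c 3 →
      A3.Adj x b → A3.Adj x c → ¬ A3.Adj x a → ¬ A3.Adj x 3 →
      A3.Adj y a → A3.Adj y c → ¬ A3.Adj y b → ¬ A3.Adj y 3 →
      A3.Adj z a → A3.Adj z b → ¬ A3.Adj z c → ¬ A3.Adj z 3 →
      WR w (f a) (f b) → WR w (f b) (f c) → False := by
    intro a b c x y z hn h1 h2 h3 h4 h5 h6 h7 h8 h9 h10 h11 h12 h13 h14 h15 h16 h17 h18 r1 r2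
    simp only [List.nodup_cons, List.mem_cons, not_or, List.not_mem_nil] at hn
    obtain ⟨⟨n1, n2, n3, n4, n5, n6, -⟩, ⟨n7, n8, n9, n10, n11, -⟩, ⟨n12, n13, n14, n15, -⟩,
      ⟨n16, n17, n18, -⟩, ⟨n19, n20, -⟩, ⟨n21, -⟩, -⟩ := hn
    have r3 : WR w (f a) (f c) := by
      rcases adj a c n2 h3 with h | h
      · exact h
      · exact absurd (r1.toP.trans r2.toP) (anti c a (Ne.symm n2) h)
    exact core (WP w) (WR w) tr rp sh (f a) (f b) (f c) (f 3) (f x) (f y) (f z)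
      (anti _ _ n1 r1) (anti _ _ n7 r2) r1 r2 r3
      (adj _ _ n6 h4) (adj _ _ n11 h5) (adj _ _ n15 h6)
      (adj _ _ (Ne.symm n8) h7) (adj _ _ (Ne.symm n12) h8) (nadj _ _ (Ne.symm n3) h9)
      (nadj _ _ n18 h10)
      (adj _ _ (Ne.symm n4) h11) (adj _ _ (Ne.symm n13) h12) (nadj _ _ (Ne.symm n9) h13)
      (nadj _ _ n20 h14)
      (adj _ _ (Ne.symm n5) h15) (adj _ _ (Ne.symm n10) h16) (nadj _ _ (Ne.symm n14) h17)
      (nadj _ _ n21 h18)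
  have m012 := main 0 1 2 6 5 4
  have m021 := main 0 2 1 6 4 5
  have m102 := main 1 0 2 5 6 4
  have m120 := main 1 2 0 5 4 6
  have m201 := main 2 0 1 4 6 5
  have m210 := main 2 1 0 4 5 6
  have a01 := adj 0 1
  have a02 := adj 0 2
  have a12 := adj 1 2
  simp [A3] at m012 m021 m102 m120 m201 m210 a01 a02 a12
  tauto

theorem chain_map_of_injOn {T V : Type*} (g : T → V) (l : List T)
    (h : ∀ a ∈ l, ∀ b ∈ l, g a = g b → a = b) :
    (l.map g).IsChain (· ≠ ·) ↔ l.IsChain (· ≠ ·) := by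
  induction l with
  | nil => simp
  | cons a l ih =>
    have ih' := ih (fun a ha b hb => h a (by simp [ha]) b (by simp [hb]))
    cases l with
    | nil => simp
    | cons b l =>
      simp only [List.map_cons, List.isChain_cons_cons] at ih' ⊢
      rw [ih']
      have : g a = g b ↔ a = b := ⟨h a (by simp) b (by simp), fun h => h ▸ rfl⟩
      rw [Ne, Ne, this]

theorem rep_of_map {V T : Type*} [Fintype V] [DecidableEq V] [DecidableEq T] (G : SimpleGraph V)
    (W : List T) (φ : V → T) (hW : ∀ v, φ v ∈ W)
    (hs : ∀ x y, x ≠ y → φ x = φ y → G.Adj x y)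
    (hd : ∀ x y, φ x ≠ φ y → (Alternates W (φ x) (φ y) ↔ G.Adj x y)) :
    WordRepresentable G := by
  refine ⟨W.flatMap (fun t => (Finset.univ.filter (fun v => φ v = t)).toList), ?_, ?_⟩
  · intro v
    simp only [List.mem_flatMap, Finset.mem_toList, Finset.mem_filter]
    exact ⟨φ v, hW v, by simp⟩
  · intro x y hxy
    by_cases he : φ x = φ y
    · refine iff_of_true ?_ (hs x y hxy he)
      change List.IsChain _ _
      rw [List.filter_flatMap]
      set L := ((Finset.univ.filter (fun v => φ v = φ x)).toList).filter
        (fun z => decide (z = x ∨ z = y)) with hL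
      have hperm : L.Perm [x, y] := by
        refine (List.perm_ext_iff_of_nodup ((Finset.nodup_toList _).filter _) (by simpa)).2 ?_
        intro a
        simp
        rintro (rfl | rfl)
        · rfl
        · exact he.symm
      obtain ⟨p, q, hpq, hLpq⟩ : ∃ p q, p ≠ q ∧ L = [p, q] := by
        obtain ⟨p, q, e⟩ := List.length_eq_two.1 (by simpa using hperm.length_eq : L.length = 2)
        refine ⟨p, q, ?_, e⟩
        have : L.Nodup := (Finset.nodup_toList _).filter _
        rw [e] at this
        simpa using this
      have key : ∀ W : List T, (W.flatMap (fun t => (Finset.univ.filter (fun v => φ v = t)).toList.filter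
          (fun z => decide (z = x ∨ z = y)))).IsChain (· ≠ ·) ∧
          ∀ r ∈ (W.flatMap (fun t => (Finset.univ.filter (fun v => φ v = t)).toList.filter
          (fun z => decide (z = x ∨ z = y)))).head?, r = p := by
        intro W
        induction W with
        | nil => simp
        | cons t W ih =>
          rw [List.flatMap_cons]
          by_cases ht : t = φ x
          · subst ht
            rw [← hL, hLpq]
            generalize W.flatMap _ = M at ih ⊢
            cases M with
            | nil => simp [hpq]
            | cons m M =>
              have hmp : m = p := ih.2 m (by simp)
              have hch := ih.1
              subst hmp
              refine ⟨?_, by simp⟩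
              simp only [List.cons_append, List.nil_append, List.isChain_cons_cons]
              exact ⟨hpq, hpq.symm, hch⟩
          · have : (Finset.univ.filter (fun v => φ v = t)).toList.filter
              (fun z => decide (z = x ∨ z = y)) = [] := by
              rw [List.filter_eq_nil_iff]
              intro a ha
              simp at ha
              subst ha
              simp only [decide_eq_true_eq]
              rintro (rfl | rfl)
              · exact ht rfl
              · exact ht he.symm
            rw [this]
            simpa using ih
      exact (key W).1
    · rw [← hd x y he]
      have key : ∀ W : List T, (W.flatMap (fun t => (Finset.univ.filter (fun v => φ v = t)).toList)).filter
          (fun z => decide (z = x ∨ z = y)) =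
          (W.filter (fun z => decide (z = φ x ∨ z = φ y))).map
            (fun t => if t = φ x then x else y) := by
        intro W
        induction W with
        | nil => simp
        | cons t W ih =>
          rw [List.flatMap_cons, List.filter_append, ih, List.filter_cons]
          by_cases h1 : t = φ x
          · have : (Finset.univ.filter (fun v => φ v = t)).toList.filter
              (fun z => decide (z = x ∨ z = y)) = [x] := by
              rw [← List.perm_singleton]
              refine (List.perm_ext_iff_of_nodup ((Finset.nodup_toList _).filter _) (by simp)).2 ?_
              intro a
              simp
              grind
            rw [this]
            simp [h1]
          · by_cases h2 : t = φ y
            · have : (Finset.univ.filter (fun v => φ v = t)).toList.filter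
                (fun z => decide (z = x ∨ z = y)) = [y] := by
                rw [← List.perm_singleton]
                refine (List.perm_ext_iff_of_nodup ((Finset.nodup_toList _).filter _) (by simp)).2 ?_
                intro a
                simp
                grind
              rw [this]
              simp [h2, Ne.symm he]
            · have : (Finset.univ.filter (fun v => φ v = t)).toList.filter
                (fun z => decide (z = x ∨ z = y)) = [] := by
                rw [List.filter_eq_nil_iff]
                intro a
                simp
                grind
              rw [this]
              simp [h1, h2]
      change List.IsChain _ _ ↔ List.IsChain _ _
      rw [key, chain_map_of_injOn]
      intro a ha b hb
      simp at ha hb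
      grind

/-- Letters: three clique vertices, and types of vertices of the other clique. -/
abbrev Ty := Fin 3 ⊕ (Bool × Bool × Bool)

def sel (s : Bool × Bool × Bool) : Fin 3 → Bool
  | 0 => s.1
  | 1 => s.2.1
  | 2 => s.2.2

instance {V : Type*} [DecidableEq V] (w : List V) (x y : V) : Decidable (Alternates w x y) :=
  inferInstanceAs (Decidable (List.IsChain _ _))

instance decMemTy (x : Ty) (W : List Ty) : Decidable (x ∈ W) :=
  @List.instDecidableMemOfLawfulBEq Ty instBEqOfDecidableEq inferInstance x W

/-- The type-word when no vertex has empty type. -/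
def W1 : List Ty :=
  [.inl 1, .inr (true, true, false), .inr (false, true, false), .inl 2,
   .inr (false, true, true), .inr (false, false, true), .inl 0, .inl 1,
   .inr (true, false, true), .inl 2, .inr (true, false, false), .inr (true, true, false),
   .inl 0, .inr (false, true, false), .inr (false, true, true), .inl 1]

/-- The type-word when no vertex has type `{1, 2}`. -/
def W2 : List Ty :=
  [.inl 2, .inr (true, false, true), .inr (false, false, true), .inr (false, false, false),
   .inl 1, .inr (false, true, false), .inl 0, .inl 2, .inr (true, true, false), .inl 1,
   .inr (true, false, false), .inr (true, false, true), .inl 0, .inr (false, false, true), .inl 2]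

def Good (W : List Ty) : Prop :=
  (∀ i, (Sum.inl i : Ty) ∈ W) ∧ (∀ i j : Fin 3, i ≠ j → Alternates W (.inl i) (.inl j)) ∧
  (∀ s t, (Sum.inr s : Ty) ∈ W → (Sum.inr t : Ty) ∈ W → s ≠ t → Alternates W (.inr s) (.inr t)) ∧
  (∀ i s, (Sum.inr s : Ty) ∈ W → (Alternates W (.inl i) (.inr s) ↔ sel s i = true)) ∧
  (∀ i s, (Sum.inr s : Ty) ∈ W → (Alternates W (.inr s) (.inl i) ↔ sel s i = true))

set_option maxRecDepth 100000 in
theorem good1 : Good W1 := by refine ⟨?_, ?_, ?_, ?_, ?_⟩ <;> decide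

set_option maxRecDepth 100000 in
theorem good2 : Good W2 := by refine ⟨?_, ?_, ?_, ?_, ?_⟩ <;> decide

theorem rep_of_good {V : Type*} [Fintype V] [DecidableEq V] (G : SimpleGraph V)
    [DecidableRel G.Adj] (W : List Ty) (hW : Good W) (a : Fin 3 → V) (ha : Function.Injective a)
    (hA : ∀ i j, i ≠ j → G.Adj (a i) (a j))
    (hB : ∀ x y, x ≠ y → (∀ i, x ≠ a i) → (∀ i, y ≠ a i) → G.Adj x y)
    (hT : ∀ x, (∀ i, x ≠ a i) →
      (.inr (decide (G.Adj x (a 0)), decide (G.Adj x (a 1)), decide (G.Adj x (a 2))) : Ty) ∈ W) :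
    WordRepresentable G := by
  obtain ⟨g1, g2, g3, g4, g5⟩ := hW
  let τ : V → Bool × Bool × Bool := fun x =>
    (decide (G.Adj x (a 0)), decide (G.Adj x (a 1)), decide (G.Adj x (a 2)))
  have hτ : ∀ x i, sel (τ x) i = true ↔ G.Adj x (a i) := by
    intro x i
    fin_cases i <;> simp [sel, τ]
  let φ : V → Ty := fun x =>
    if x = a 0 then .inl 0 else if x = a 1 then .inl 1 else if x = a 2 then .inl 2 else .inr (τ x)
  have hφ : ∀ x, (∃ i, x = a i ∧ φ x = .inl i) ∨ ((∀ i, x ≠ a i) ∧ φ x = .inr (τ x)) := by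
    intro x
    by_cases h0 : x = a 0
    · exact Or.inl ⟨0, h0, by simp [φ, h0]⟩
    by_cases h1 : x = a 1
    · exact Or.inl ⟨1, h1, by simp only [φ, if_neg h0, if_pos h1]⟩
    by_cases h2 : x = a 2
    · exact Or.inl ⟨2, h2, by simp only [φ, if_neg h0, if_neg h1, if_pos h2]⟩
    · refine Or.inr ⟨?_, by simp only [φ, if_neg h0, if_neg h1, if_neg h2]⟩
      intro i
      fin_cases i <;> assumption
  refine rep_of_map G W φ ?_ ?_ ?_
  · intro v
    rcases hφ v with ⟨i, h1, h2⟩ | ⟨h1, h2⟩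
    · rw [h2]; exact g1 i
    · rw [h2]; exact hT v h1
  · intro x y hxy he
    rcases hφ x with ⟨i, h1, h2⟩ | ⟨h1, h2⟩ <;> rcases hφ y with ⟨j, h3, h4⟩ | ⟨h3, h4⟩ <;>
      rw [h2, h4] at he
    · simp at he; subst he; exact absurd (h1.trans h3.symm) hxy
    · simp at he
    · simp at he
    · exact hB x y hxy h1 h3
  · intro x y he
    rcases hφ x with ⟨i, h1, h2⟩ | ⟨h1, h2⟩ <;> rcases hφ y with ⟨j, h3, h4⟩ | ⟨h3, h4⟩ <;>
      rw [h2, h4] at he ⊢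
    · have hij : i ≠ j := fun h => he (by rw [h])
      rw [h1, h3]
      exact iff_of_true (g2 i j hij) (hA i j hij)
    · rw [g4 i (τ y) (hT y h3), hτ, h1, G.adj_comm]
    · rw [g5 j (τ x) (hT x h1), hτ, h3]
    · have hst : τ x ≠ τ y := fun h => he (by rw [h])
      refine iff_of_true (g3 _ _ (hT x h1) (hT y h3) hst) (hB x y ?_ h1 h3)
      rintro rfl
      exact hst rfl

theorem rep_cases {V : Type*} [Fintype V] [DecidableEq V] (G : SimpleGraph V)
    (a b c : V) (B : V → Prop) (hab : G.Adj a b) (hac : G.Adj a c) (hbc : G.Adj b c)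
    (hV : ∀ x, x ≠ a → x ≠ b → x ≠ c → B x)
    (hB : ∀ x y, x ≠ y → B x → B y → G.Adj x y)
    (hn : ∀ x, B x → ¬ (G.Adj x a ∧ G.Adj x b ∧ G.Adj x c))
    (h : (∀ x, B x → G.Adj x a ∨ G.Adj x b ∨ G.Adj x c) ∨
      (∀ x, B x → ¬ (¬ G.Adj x a ∧ G.Adj x b ∧ G.Adj x c))) : WordRepresentable G := by
  classical
  have inj : Function.Injective ![a, b, c] := by
    intro i j hij
    have := hab.ne
    have := hac.ne
    have := hbc.ne
    fin_cases i <;> fin_cases j <;> simp_all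
  have hA : ∀ i j, i ≠ j → G.Adj (![a, b, c] i) (![a, b, c] j) := by
    intro i j hij
    fin_cases i <;> fin_cases j <;> simp_all [G.adj_comm]
  have hV' : ∀ x, (∀ i, x ≠ ![a, b, c] i) → B x := by
    intro x hx
    exact hV x (hx 0) (hx 1) (hx 2)
  rcases h with h | h
  · refine rep_of_good G W1 good1 ![a, b, c] inj hA
      (fun x y hxy hx hy => hB x y hxy (hV' x hx) (hV' y hy)) ?_
    intro x hx
    have h1 := h x (hV' x hx)
    have h2 := hn x (hV' x hx)
    by_cases p : G.Adj x a <;> by_cases q : G.Adj x b <;> by_cases r : G.Adj x c <;>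
      simp [p, q, r] at h1 h2 <;> simp [p, q, r, W1]
  · refine rep_of_good G W2 good2 ![a, b, c] inj hA
      (fun x y hxy hx hy => hB x y hxy (hV' x hx) (hV' y hy)) ?_
    intro x hx
    have h1 := h x (hV' x hx)
    have h2 := hn x (hV' x hx)
    by_cases p : G.Adj x a <;> by_cases q : G.Adj x b <;> by_cases r : G.Adj x c <;>
      simp [p, q, r] at h1 h2 <;> simp [p, q, r, W2]

/-- For every `n ≥ 1`, a `K₃`-`K_n` graph is word-representable if and only if it does
not contain the graph `A₃` as an induced subgraph. -/
theorem stmt9 {V : Type*} [Fintype V] [DecidableEq V] (G : SimpleGraph V)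
    (n : ℕ) (hn : 1 ≤ n) (h : IsKmKn G 3 n) :
    WordRepresentable G ↔ ¬ ContainsInducedCopy G A3 := by
  refine ⟨fun h1 h2 => not_rep_of_A3 G h2 h1, fun hc => ?_⟩
  obtain ⟨A, B, hAB, hdis, hA3, -, hA, hB, hno⟩ := h
  obtain ⟨a, b, c, nab, nac, nbc, rfl⟩ := Finset.card_eq_three.1 hA3
  have hab : G.Adj a b := hA (by simp) (by simp) nab
  have hac : G.Adj a c := hA (by simp) (by simp) nac
  have hbc : G.Adj b c := hA (by simp) (by simp) nbc
  have hV : ∀ x, x ≠ a → x ≠ b → x ≠ c → x ∈ B := by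
    intro x h1 h2 h3
    have : x ∈ ({a, b, c} : Finset V) ∪ B := by rw [hAB]; simp
    simpa [h1, h2, h3] using this
  have hB' : ∀ x y, x ≠ y → x ∈ B → y ∈ B → G.Adj x y := fun x y hxy hx hy => hB hx hy hxy
  have hn' : ∀ x, x ∈ B → ¬ (G.Adj x a ∧ G.Adj x b ∧ G.Adj x c) := by
    intro x hx h
    obtain ⟨t, ht, h'⟩ := hno x hx
    simp at ht
    rcases ht with rfl | rfl | rfl <;> tauto
  have hBA : ∀ x ∈ B, x ≠ a ∧ x ≠ b ∧ x ≠ c := by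
    intro x hx
    have := Finset.disjoint_right.1 hdis hx
    simpa using this
  by_cases c0 : ∀ x, x ∈ B → G.Adj x a ∨ G.Adj x b ∨ G.Adj x c
  · exact rep_cases G a b c (· ∈ B) hab hac hbc hV hB' hn' (Or.inl c0)
  by_cases c1 : ∀ x, x ∈ B → ¬ (¬ G.Adj x a ∧ G.Adj x b ∧ G.Adj x c)
  · exact rep_cases G a b c (· ∈ B) hab hac hbc hV hB' hn' (Or.inr c1)
  by_cases c2 : ∀ x, x ∈ B → ¬ (¬ G.Adj x b ∧ G.Adj x a ∧ G.Adj x c)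
  · exact rep_cases G b a c (· ∈ B) hab.symm hbc hac (fun x p q r => hV x q p r) hB'
      (fun x hx p => hn' x hx ⟨p.2.1, p.1, p.2.2⟩) (Or.inr c2)
  by_cases c3 : ∀ x, x ∈ B → ¬ (¬ G.Adj x c ∧ G.Adj x a ∧ G.Adj x b)
  · exact rep_cases G c a b (· ∈ B) hac.symm hbc.symm hab (fun x p q r => hV x q r p) hB'
      (fun x hx p => hn' x hx ⟨p.2.1, p.2.2, p.1⟩) (Or.inr c3)
  exfalso
  apply hc
  push Not at c0 c1 c2 c3
  obtain ⟨d, hd, d1, d2, d3⟩ := c0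
  obtain ⟨x, hx, x1, x2, x3⟩ := c1
  obtain ⟨y, hy, y1, y2, y3⟩ := c2
  obtain ⟨z, hz, z1, z2, z3⟩ := c3
  have dx : G.Adj d x := hB' _ _ (by rintro rfl; tauto) hd hx
  have dy : G.Adj d y := hB' _ _ (by rintro rfl; tauto) hd hy
  have dz : G.Adj d z := hB' _ _ (by rintro rfl; tauto) hd hz
  have xy : G.Adj x y := hB' _ _ (by rintro rfl; tauto) hx hy
  have xz : G.Adj x z := hB' _ _ (by rintro rfl; tauto) hx hz
  have yz : G.Adj y z := hB' _ _ (by rintro rfl; tauto) hy hz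
  -- clique `x, y, z, d`; the triangle vertices: `c ~ x, y`, `b ~ x, z`, `a ~ y, z`
  have nd := hBA d hd
  have nx := hBA x hx
  have ny := hBA y hy
  have nz := hBA z hz
  have e1 := dx.ne
  have e2 := dy.ne
  have e3 := dz.ne
  have e4 := xy.ne
  have e5 := xz.ne
  have e6 := yz.ne
  refine ⟨![x, y, z, d, c, b, a], ?_, ?_⟩
  · intro i j hij
    fin_cases i <;> fin_cases j <;> simp at hij ⊢ <;> grind
  · intro i j
    fin_cases i <;> fin_cases j <;> simp [A3, *, G.adj_comm] <;>
      first | assumption | (rw [G.adj_comm]; assumption)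
end
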